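/- arXiv:2412.19280 — 4 statements merged into one kernel-verified Lean document; each statement's English description precedes it below -/
import Mathlib

section
/- Let G : ℓ^m → ℓ^r be strictly causal and K : ℓ^r → ℓ^m be causal. Then for every pair (v,d) ∈ ℓ^r × ℓ^m there exists a unique pair (y,u) ∈ ℓ^r × ℓ^m satisfying y = G u + v and u = K y + d. Consequently the closed-loop map Φ_{G,K} : (v,d) ↦ (y,u) is a bijection of ℓ^r × ℓ^m whose inverse is (y,u) ↦ (y − G u, u − K y); moreover the first component of the inverse, (y,u) ↦ y − G u, is causal in y and strictly causal in u, and the second component, (y,u) ↦ u − K y, is causal in both arguments. -/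
/-- Sequences with values in `ℝ^n` (with the Euclidean norm). -/
abbrev Traj (n : ℕ) : Type := ℕ → EuclideanSpace ℝ (Fin n)

/-- A causal operator on sequences. -/
def Causal {n m : ℕ} (A : Traj n → Traj m) : Prop :=
  ∀ (x x' : Traj n) (t : ℕ), (∀ s, s ≤ t → x s = x' s) → A x t = A x' t

/-- A strictly causal operator on sequences. -/
def StrictlyCausal {n m : ℕ} (A : Traj n → Traj m) : Prop :=
  ∀ (x x' : Traj n) (t : ℕ), (∀ s, s < t → x s = x' s) → A x t = A x' t

/-- Causal in the first argument, strictly causal in the second argument. -/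
def CausalSC {n q m : ℕ} (B : Traj n → Traj q → Traj m) : Prop :=
  ∀ (x x' : Traj n) (z z' : Traj q) (t : ℕ),
    (∀ s, s ≤ t → x s = x' s) → (∀ s, s < t → z s = z' s) → B x z t = B x' z' t

/-- Causal in both arguments. -/
def CausalCC {n q m : ℕ} (B : Traj n → Traj q → Traj m) : Prop :=
  ∀ (x x' : Traj n) (z z' : Traj q) (t : ℕ),
    (∀ s, s ≤ t → x s = x' s) → (∀ s, s ≤ t → z s = z' s) → B x z t = B x' z' t

/-- Strictly causal in both arguments. -/
def CausalSS {n q m : ℕ} (B : Traj n → Traj q → Traj m) : Prop :=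
  ∀ (x x' : Traj n) (z z' : Traj q) (t : ℕ),
    (∀ s, s < t → x s = x' s) → (∀ s, s < t → z s = z' s) → B x z t = B x' z' t

/-- Membership in `ℓ_p`: summability of `‖x t‖ ^ p`. -/
def InLp (p : ℝ) {E : Type*} [Norm E] (x : ℕ → E) : Prop :=
  Summable fun t => ‖x t‖ ^ p

/-- The `ℓ_p` norm `(∑ₜ ‖x t‖ ^ p) ^ (1/p)` of a sequence. -/
noncomputable def lpSeqNorm (p : ℝ) {E : Type*} [Norm E] (x : ℕ → E) : ℝ :=
  (∑' t, ‖x t‖ ^ p) ^ (1 / p)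

/-- The `ℝ^{r+m}`-valued sequence obtained by stacking `v` and `d`
(the norm of `(v t, d t)` is the Euclidean norm of the concatenated vector). -/
noncomputable def pairSeq {r m : ℕ} (v : Traj r) (d : Traj m) :
    ℕ → WithLp 2 (EuclideanSpace ℝ (Fin r) × EuclideanSpace ℝ (Fin m)) :=
  fun t => (WithLp.equiv 2 _).symm (v t, d t)

/-- An exponentially decaying sequence: `‖x t‖ ≤ k · α ^ t` with `k > 0`, `α ∈ (0,1)`. -/
def ExpDecay {E : Type*} [Norm E] (x : ℕ → E) : Prop :=
  ∃ k : ℝ, 0 < k ∧ ∃ α : ℝ, 0 < α ∧ α < 1 ∧ ∀ t, ‖x t‖ ≤ k * α ^ t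

/-!
Eliminating `y` from `y = G u + v`, `u = K y + d` turns the loop into the fixed-point equation
`u = K (G u + v) + d`. The delay in `G` makes its right-hand side strictly causal in `u`, so the
equation prescribes `u t` in terms of the strict past of `u`; well-founded recursion in time
produces a solution and well-founded induction shows that it is the only one.
-/

section CausalOperators

variable {ι E F H : Type*} [Preorder ι]

/-- Causality of an operator on trajectories, for an arbitrary preordered time set `ι` and arbitrary
value types; at `ι = ℕ` and Euclidean values this unfolds to `Causal`. -/
def IsCausal (A : (ι → E) → ι → F) : Prop :=
  ∀ (x x' : ι → E) (t : ι), Set.EqOn x x' (Set.Iic t) → A x t = A x' t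

/-- Strict causality of an operator on trajectories: the value at time `t` depends only on the
strict past of `t`. At `ι = ℕ` and Euclidean values this unfolds to `StrictlyCausal`. -/
def IsStrictlyCausal (A : (ι → E) → ι → F) : Prop :=
  ∀ (x x' : ι → E) (t : ι), Set.EqOn x x' (Set.Iio t) → A x t = A x' t

/-- Causality in the first argument and strict causality in the second one; at `ι = ℕ` and
Euclidean values this unfolds to `CausalSC`. -/
def IsCausalStrictlyCausal (B : (ι → E) → (ι → F) → ι → H) : Prop :=
  ∀ (x x' : ι → E) (z z' : ι → F) (t : ι),
    Set.EqOn x x' (Set.Iic t) → Set.EqOn z z' (Set.Iio t) → B x z t = B x' z' t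

/-- Causality in both arguments; at `ι = ℕ` and Euclidean values this unfolds to `CausalCC`. -/
def IsJointlyCausal (B : (ι → E) → (ι → F) → ι → H) : Prop :=
  ∀ (x x' : ι → E) (z z' : ι → F) (t : ι),
    Set.EqOn x x' (Set.Iic t) → Set.EqOn z z' (Set.Iic t) → B x z t = B x' z' t

theorem IsCausal.comp_isStrictlyCausal {A : (ι → F) → ι → H} {B : (ι → E) → ι → F}
    (hA : IsCausal A) (hB : IsStrictlyCausal B) : IsStrictlyCausal (A ∘ B) :=
  fun x x' t hx ↦ hA (B x) (B x') t fun s hs ↦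
    hB x x' s (hx.mono (Set.Iio_subset_Iio hs))

theorem IsStrictlyCausal.add_const [Add F] {A : (ι → E) → ι → F} (hA : IsStrictlyCausal A)
    (c : ι → F) : IsStrictlyCausal fun x ↦ A x + c :=
  fun x x' t hx ↦ congrArg (· + c t) (hA x x' t hx)

theorem IsStrictlyCausal.isCausalStrictlyCausal_sub [Sub E] {A : (ι → F) → ι → E}
    (hA : IsStrictlyCausal A) : IsCausalStrictlyCausal fun x z ↦ x - A z :=
  fun _ _ z z' t hx hz ↦ congrArg₂ (· - ·) (hx Set.self_mem_Iic) (hA z z' t hz)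

theorem IsCausal.isJointlyCausal_sub [Sub F] {A : (ι → E) → ι → F} (hA : IsCausal A) :
    IsJointlyCausal fun x z ↦ z - A x :=
  fun x x' _ _ t hx hz ↦ congrArg₂ (· - ·) (hz Set.self_mem_Iic) (hA x x' t hx)

variable [WellFoundedLT ι]

theorem IsStrictlyCausal.exists_isFixedPt [Nonempty E] {A : (ι → E) → ι → E}
    (hA : IsStrictlyCausal A) : ∃ x, Function.IsFixedPt A x := by
  classical
  obtain ⟨e⟩ := ‹Nonempty E›
  -- Past values are padded with `e` from time `t` on; strict causality makes the padding invisible.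
  let x : ι → E := (wellFounded_lt (α := ι)).fix fun t past ↦
    A (fun s ↦ if h : s < t then past s h else e) t
  have x_eq (t : ι) : x t = A (fun s ↦ if s < t then x s else e) t :=
    wellFounded_lt.fix_eq _ t
  refine ⟨x, funext fun t ↦ ?_⟩
  rw [x_eq t]
  exact hA _ _ t fun s hs ↦ (if_pos hs).symm

theorem IsStrictlyCausal.isFixedPt_unique {A : (ι → E) → ι → E} (hA : IsStrictlyCausal A)
    {x x' : ι → E} (hx : Function.IsFixedPt A x) (hx' : Function.IsFixedPt A x') : x = x' := by
  funext t
  induction t using WellFoundedLT.induction with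
  | ind t ih => rw [← hx, ← hx', hA x x' t ih]

end CausalOperators

section ClosedLoop

variable {ι E F : Type*}

theorem closedLoop_iff_sub_eq [AddCommGroup E] [AddCommGroup F] {G : F → E} {K : E → F}
    {v y : E} {d u : F} : (y = G u + v ∧ u = K y + d) ↔ (y - G u, u - K y) = (v, d) := by
  rw [Prod.mk.injEq, sub_eq_iff_eq_add', sub_eq_iff_eq_add']

theorem existsUnique_closedLoop [Preorder ι] [WellFoundedLT ι] [Add E] [Add F] [Nonempty F]
    {G : (ι → F) → ι → E} {K : (ι → E) → ι → F} (hG : IsStrictlyCausal G) (hK : IsCausal K)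
    (v : ι → E) (d : ι → F) :
    ∃! yu : (ι → E) × (ι → F), yu.1 = G yu.2 + v ∧ yu.2 = K yu.1 + d := by
  have loop_strictlyCausal : IsStrictlyCausal fun u ↦ K (G u + v) + d :=
    (hK.comp_isStrictlyCausal (hG.add_const v)).add_const d
  obtain ⟨u, hu⟩ := loop_strictlyCausal.exists_isFixedPt
  refine ⟨(G u + v, u), ⟨rfl, hu.symm⟩, ?_⟩
  rintro ⟨y', u'⟩ ⟨hy', hu'⟩
  dsimp only at hy' hu'
  subst hy'
  obtain rfl : u' = u := loop_strictlyCausal.isFixedPt_unique hu'.symm hu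
  rfl

theorem statement0_general [Preorder ι] [WellFoundedLT ι] [AddCommGroup E] [AddCommGroup F]
    (G : (ι → F) → ι → E) (K : (ι → E) → ι → F) (hG : IsStrictlyCausal G) (hK : IsCausal K) :
    (∀ (v : ι → E) (d : ι → F),
        ∃! yu : (ι → E) × (ι → F), yu.1 = G yu.2 + v ∧ yu.2 = K yu.1 + d) ∧
    Function.Bijective
      (fun yu : (ι → E) × (ι → F) ↦ (yu.1 - G yu.2, yu.2 - K yu.1)) ∧
    (∀ (v : ι → E) (d : ι → F) (y : ι → E) (u : ι → F),
        (y = G u + v ∧ u = K y + d) ↔ (y - G u, u - K y) = (v, d)) ∧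
    IsCausalStrictlyCausal (fun (y : ι → E) (u : ι → F) ↦ y - G u) ∧
    IsJointlyCausal (fun (y : ι → E) (u : ι → F) ↦ u - K y) := by
  have wellPosed := existsUnique_closedLoop hG hK
  refine ⟨wellPosed, ?_, fun _ _ _ _ ↦ closedLoop_iff_sub_eq,
    hG.isCausalStrictlyCausal_sub, hK.isJointlyCausal_sub⟩
  rw [Function.bijective_iff_existsUnique]
  rintro ⟨v, d⟩
  simpa only [closedLoop_iff_sub_eq] using wellPosed v d

end ClosedLoop

/-- well-posedness of the closed loop and the form of the inverse of the
closed-loop map `Φ_{G,K} : (v,d) ↦ (y,u)`. -/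
theorem statement0 {r m : ℕ} (G : Traj m → Traj r) (K : Traj r → Traj m)
    (hG : StrictlyCausal G) (hK : Causal K) :
    (∀ (v : Traj r) (d : Traj m),
        ∃! yu : Traj r × Traj m, yu.1 = G yu.2 + v ∧ yu.2 = K yu.1 + d) ∧
    Function.Bijective
      (fun yu : Traj r × Traj m => (yu.1 - G yu.2, yu.2 - K yu.1)) ∧
    (∀ (v : Traj r) (d : Traj m) (y : Traj r) (u : Traj m),
        (y = G u + v ∧ u = K y + d) ↔ (y - G u, u - K y) = (v, d)) ∧
    CausalSC (fun (y : Traj r) (u : Traj m) => y - G u) ∧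
    CausalCC (fun (y : Traj r) (u : Traj m) => u - K y) :=
  statement0_general G K hG hK
end

section
/- Let G : ℓ^m → ℓ^r be strictly causal, K : ℓ^r → ℓ^m be causal, and let Φ = (Φ^y, Φ^u) be the closed-loop map; write Φ^{u°}(v,d) = Φ^u(v,d) − d. Then: (i) Φ^{u°} is causal in v and strictly causal in d (causal–strictly-causal); (ii) Φ^y(v,d) = G(Φ^u(v,d)) + v for every (v,d); (iii) for every (v,d), letting (ṽ,d̃) be the unique pair with Φ(ṽ,d̃) = (Φ^y(v,d), 0) (such a pair exists and is unique since Φ is a bijection), one has Φ^{u°}(v,d) = Φ^{u°}(ṽ,d̃); and (iv) the controller is recovered from the closed-loop map: for every y ∈ ℓ^r, K y = Φ^{u°}(ṽ,d̃), where (ṽ,d̃) is the unique pair with Φ(ṽ,d̃) = (y, 0). -/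
/-!
The control signal minus its disturbance is `K y`, so everything about it follows from the output
`y`. Up to time `t`, the output depends on `v` up to `t` and on `u` before `t`, and `u` before `t`
depends on `d` and `y` before `t`; well-founded induction on time closes this loop. In particular
the disturbances determine the response. Conversely, solving the loop equations for the
disturbances shows that the response determines them, which inverts the closed-loop map.

Causality and strict causality are expressed by `DependsOn`: the value of the operator at `t`
depends only on its argument on `Set.Iic t`, respectively `Set.Iio t`. Time may then be any
well-founded preorder.
-/

section ClosedLoop

variable {T E F : Type*}

/-- The closed-loop equations `y = G u + v`, `u = K y + d` of a plant `G` and a controller `K`,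
for the disturbances `w = (v, d)` and the response `z = (y, u)`. -/
def IsClosedLoopResponse [Add E] [Add F] (G : (T → F) → T → E) (K : (T → E) → T → F)
    (w z : (T → E) × (T → F)) : Prop :=
  z.1 = G z.2 + w.1 ∧ z.2 = K z.1 + w.2

/-- A closed-loop map of `G` and `K`: it sends all disturbances `(v, d)` to a response `(y, u)`
solving the closed-loop equations. -/
def IsClosedLoopMap [Add E] [Add F] (G : (T → F) → T → E) (K : (T → E) → T → F)
    (Φ : (T → E) × (T → F) → (T → E) × (T → F)) : Prop :=
  ∀ w, IsClosedLoopResponse G K w (Φ w)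

/-- The disturbances `(y - G u, u - K y)` producing the response `(y, u)`, that is, the inverse of
the closed-loop map. The differences are written `-G u + y` and `-K y + u` so that signal values
may lie in noncommutative groups. -/
def closedLoopDisturbance [AddGroup E] [AddGroup F] (G : (T → F) → T → E) (K : (T → E) → T → F)
    (z : (T → E) × (T → F)) : (T → E) × (T → F) :=
  (-G z.2 + z.1, -K z.1 + z.2)

variable {G : (T → F) → T → E} {K : (T → E) → T → F}
  {Φ : (T → E) × (T → F) → (T → E) × (T → F)} {w w' z z' : (T → E) × (T → F)}

theorem IsClosedLoopResponse.input_sub_eq [Add E] [AddGroup F]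
    (hz : IsClosedLoopResponse G K w z) : z.2 - w.2 = K z.1 :=
  sub_eq_of_eq_add hz.2

theorem isClosedLoopResponse_iff [AddGroup E] [AddGroup F] :
    IsClosedLoopResponse G K w z ↔ closedLoopDisturbance G K z = w := by
  rw [IsClosedLoopResponse, closedLoopDisturbance, Prod.ext_iff, neg_add_eq_iff_eq_add,
    neg_add_eq_iff_eq_add]

variable [Preorder T] [WellFoundedLT T]

namespace IsClosedLoopResponse

variable [Add E] [Add F]

theorem eqOn_output (hG : ∀ t, DependsOn (G · t) (Set.Iio t))
    (hK : ∀ t, DependsOn (K · t) (Set.Iic t))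
    (hz : IsClosedLoopResponse G K w z) (hz' : IsClosedLoopResponse G K w' z') {t : T}
    (hv : Set.EqOn w.1 w'.1 (Set.Iic t)) (hd : Set.EqOn w.2 w'.2 (Set.Iio t)) :
    Set.EqOn z.1 z'.1 (Set.Iic t) := by
  intro s
  induction s using WellFoundedLT.induction with
  | ind s output_eq_before =>
    intro (hst : s ≤ t)
    have input_eq_before : ∀ q < s, z.2 q = z'.2 q := by
      intro q hqs
      have hKq : K z.1 q = K z'.1 q := hK q fun p (hpq : p ≤ q) =>
        have hps : p < s := hpq.trans_lt hqs
        output_eq_before p hps (hps.le.trans hst)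
      rw [hz.2, hz'.2, Pi.add_apply, Pi.add_apply, hKq, hd (hqs.trans_le hst)]
    have hGs : G z.2 s = G z'.2 s := hG s input_eq_before
    rw [hz.1, hz'.1, Pi.add_apply, Pi.add_apply, hGs, hv hst]

theorem unique (hG : ∀ t, DependsOn (G · t) (Set.Iio t))
    (hK : ∀ t, DependsOn (K · t) (Set.Iic t))
    (hz : IsClosedLoopResponse G K w z) (hz' : IsClosedLoopResponse G K w z') : z = z' := by
  have output_eq : z.1 = z'.1 := funext fun _ =>
    eqOn_output hG hK hz hz' (Set.eqOn_refl _ _) (Set.eqOn_refl _ _) Set.self_mem_Iic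
  have input_eq : z.2 = z'.2 := by rw [hz.2, hz'.2, output_eq]
  exact Prod.ext output_eq input_eq

end IsClosedLoopResponse

namespace IsClosedLoopMap

theorem causal_input_sub [Add E] [AddGroup F]
    (hG : ∀ t, DependsOn (G · t) (Set.Iio t)) (hK : ∀ t, DependsOn (K · t) (Set.Iic t))
    (hΦ : IsClosedLoopMap G K Φ) {t : T}
    (hv : Set.EqOn w.1 w'.1 (Set.Iic t)) (hd : Set.EqOn w.2 w'.2 (Set.Iio t)) :
    ((Φ w).2 - w.2) t = ((Φ w').2 - w'.2) t := by
  rw [(hΦ w).input_sub_eq, (hΦ w').input_sub_eq]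
  exact hK t ((hΦ w).eqOn_output hG hK (hΦ w') hv hd)

variable [AddGroup E] [AddGroup F]

theorem apply_eq_iff (hG : ∀ t, DependsOn (G · t) (Set.Iio t))
    (hK : ∀ t, DependsOn (K · t) (Set.Iic t))
    (hΦ : IsClosedLoopMap G K Φ) : Φ w = z ↔ closedLoopDisturbance G K z = w := by
  rw [← isClosedLoopResponse_iff]
  exact ⟨fun h => h ▸ hΦ w, (hΦ w).unique hG hK⟩

theorem bijective (hG : ∀ t, DependsOn (G · t) (Set.Iio t))
    (hK : ∀ t, DependsOn (K · t) (Set.Iic t))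
    (hΦ : IsClosedLoopMap G K Φ) : Function.Bijective Φ :=
  Function.bijective_iff_has_inverse.2 ⟨closedLoopDisturbance G K,
    fun _ => (hΦ.apply_eq_iff hG hK).1 rfl, fun _ => (hΦ.apply_eq_iff hG hK).2 rfl⟩

end IsClosedLoopMap

theorem statement1_general [AddGroup E] [AddGroup F]
    (hG : ∀ t, DependsOn (G · t) (Set.Iio t)) (hK : ∀ t, DependsOn (K · t) (Set.Iic t))
    (hΦ : IsClosedLoopMap G K Φ) :
    (∀ (v v' : T → E) (d d' : T → F) (t : T),
      Set.EqOn v v' (Set.Iic t) → Set.EqOn d d' (Set.Iio t) →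
      ((Φ (v, d)).2 - d) t = ((Φ (v', d')).2 - d') t) ∧
    (∀ (v : T → E) (d : T → F), (Φ (v, d)).1 = G (Φ (v, d)).2 + v) ∧
    (∀ y : T → E, ∃! w : (T → E) × (T → F), Φ w = (y, 0)) ∧
    (∀ (v v' : T → E) (d d' : T → F),
      Φ (v', d') = ((Φ (v, d)).1, 0) → (Φ (v, d)).2 - d = (Φ (v', d')).2 - d') ∧
    (∀ (y v' : T → E) (d' : T → F), Φ (v', d') = (y, 0) → K y = (Φ (v', d')).2 - d') := by
  have recover_controller (y v' : T → E) (d' : T → F) (h : Φ (v', d') = (y, 0)) :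
      K y = (Φ (v', d')).2 - d' := by
    rw [(hΦ (v', d')).input_sub_eq, h]
  refine ⟨?causal, fun v d => (hΦ (v, d)).1, fun y => (hΦ.bijective hG hK).existsUnique (y, 0),
    ?input_sub_eq, recover_controller⟩
  case causal =>
    intro v v' d d' t
    exact hΦ.causal_input_sub hG hK (w := (v, d)) (w' := (v', d'))
  case input_sub_eq =>
    intro v v' d d' h
    exact (hΦ (v, d)).input_sub_eq.trans (recover_controller _ v' d' h)

end ClosedLoop

/-- properties of the closed-loop map `Φ = (Φ^y, Φ^u)` of a strictly causal
plant `G` with a causal controller `K`. -/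
theorem statement1 {r m : ℕ} (G : Traj m → Traj r) (K : Traj r → Traj m)
    (hG : StrictlyCausal G) (hK : Causal K)
    (Φ : Traj r × Traj m → Traj r × Traj m)
    (hΦ : ∀ (v : Traj r) (d : Traj m),
      (Φ (v, d)).1 = G (Φ (v, d)).2 + v ∧ (Φ (v, d)).2 = K (Φ (v, d)).1 + d) :
    -- (i) Φ^{u°} is causal in v and strictly causal in d
    CausalSC (fun (v : Traj r) (d : Traj m) => (Φ (v, d)).2 - d) ∧
    -- (ii) Φ^y(v,d) = G(Φ^u(v,d)) + v
    (∀ (v : Traj r) (d : Traj m), (Φ (v, d)).1 = G ((Φ (v, d)).2) + v) ∧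
    -- for every y there is a unique (ṽ,d̃) with Φ(ṽ,d̃) = (y,0)
    (∀ y : Traj r, ∃! vd : Traj r × Traj m, Φ vd = (y, (0 : Traj m))) ∧
    -- (iii) Φ^{u°}(v,d) = Φ^{u°}(ṽ,d̃) whenever Φ(ṽ,d̃) = (Φ^y(v,d), 0)
    (∀ (v v' : Traj r) (d d' : Traj m),
      Φ (v', d') = ((Φ (v, d)).1, (0 : Traj m)) →
      (Φ (v, d)).2 - d = (Φ (v', d')).2 - d') ∧
    -- (iv) the controller is recovered from the closed-loop map
    (∀ (y v' : Traj r) (d' : Traj m),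
      Φ (v', d') = (y, (0 : Traj m)) → K y = (Φ (v', d')).2 - d') :=
  statement1_general (fun t x x' => hG x x' t) (fun t x x' => hK x x' t) fun w => hΦ w.1 w.2
end

section
/- Let Ψ^{y°} : ℓ^r × ℓ^m → ℓ^r be strictly causal in both arguments and let Ψ^{u°} : ℓ^r × ℓ^m → ℓ^m be causal–strictly-causal. Define Ψ : ℓ^r × ℓ^m → ℓ^r × ℓ^m by Ψ(v,d) = (v + Ψ^{y°}(v,d), d + Ψ^{u°}(v,d)). Then Ψ is a bijection: for every (y,u) ∈ ℓ^r × ℓ^m there exists a unique (v,d) ∈ ℓ^r × ℓ^m with v = y − Ψ^{y°}(v,d) and d = u − Ψ^{u°}(v,d). Moreover, the first component of the inverse map Ψ^{-1}, (y,u) ↦ v, is causal in y and strictly causal in u, and the second component, (y,u) ↦ d, is causal in both arguments. -/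
/-!
Order the coordinates of a pair of sequences as `v 0, d 0, v 1, d 1, …`. The causality assumptions
say that each coordinate of `(Ψ^{y°}, Ψ^{u°})` depends only on strictly earlier coordinates, so
`Ψ` is the identity plus a strictly lower triangular map. Hence `Ψ(v, d) = (y, u)` can be solved one
coordinate at a time, and each coordinate of the solution depends only on the data up to its place
in this order.
-/

open Set

/-- Two-input signal operators over a time axis `T` whose output at time `t` is determined by the
restriction of the first input to the window `W₁ t` and of the second input to the window `W₂ t`.
The windows `Iic` and `Iio` express causality and strict causality in the respective argument, so
that `CausalSS`, `CausalSC` and `CausalCC` are the instances `Iio Iio`, `Iic Iio` and `Iic Iic`. -/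
def DependsWithin {T X Z Y : Type*} (W₁ W₂ : T → Set T)
    (B : (T → X) → (T → Z) → T → Y) : Prop :=
  ∀ (x x' : T → X) (z z' : T → Z) (t : T),
    EqOn x x' (W₁ t) → EqOn z z' (W₂ t) → B x z t = B x' z' t

/-- The map `Ψ(v, d) = (v + Ψ^{y°}(v, d), d + Ψ^{u°}(v, d))`, that is, the identity plus the pair
of operators `(Ψ^{y°}, Ψ^{u°})`. -/
def idAddPair {T E F : Type*} [Add E] [Add F] (Ψy : (T → E) → (T → F) → T → E)
    (Ψu : (T → E) → (T → F) → T → F) (p : (T → E) × (T → F)) : (T → E) × (T → F) :=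
  (p.1 + Ψy p.1 p.2, p.2 + Ψu p.1 p.2)

theorem exists_fixedPoint_of_dependsOn_Iio {ι : Type*} [Preorder ι] [WellFoundedLT ι]
    {α : ι → Type*} [∀ i, Nonempty (α i)] {G : (∀ i, α i) → ∀ i, α i}
    (hG : ∀ i, DependsOn (fun x ↦ G x i) (Iio i)) : ∃ x, G x = x := by
  classical
  let step (i : ι) (past : ∀ j, j < i → α j) : α i :=
    G (fun j ↦ if h : j < i then past j h else Classical.arbitrary (α j)) i
  let x : ∀ i, α i := wellFounded_lt.fix step
  refine ⟨x, funext fun i ↦ ?_⟩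
  calc G x i = step i (fun j _ ↦ x j) :=
        hG i fun j hj ↦ by simp only [dif_pos (mem_Iio.1 hj)]
    _ = x i := (wellFounded_lt.fix_eq step i).symm

theorem eqOn_Iic_of_eqOn_Iio {T X : Type*} [PartialOrder T] {x x' : T → X} {t : T}
    (hlt : EqOn x x' (Iio t)) (ht : x t = x' t) : EqOn x x' (Iic t) := by
  rw [← Iio_union_right, eqOn_union, eqOn_singleton]
  exact ⟨hlt, ht⟩

theorem DependsWithin.apply_eq_of_add_apply_eq {T X Z Y : Type*} [Add Y] [IsRightCancelAdd Y]
    {W₁ W₂ : T → Set T} {B : (T → X) → (T → Z) → T → Y} (hB : DependsWithin W₁ W₂ B)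
    {x x' : T → X} {z z' : T → Z} {w w' : T → Y} {t : T}
    (hx : EqOn x x' (W₁ t)) (hz : EqOn z z' (W₂ t))
    (h : (w + B x z) t = (w' + B x' z') t) : w t = w' t := by
  rw [Pi.add_apply, Pi.add_apply, hB x x' z z' t hx hz] at h
  exact add_right_cancel h

namespace idAddPair

variable {T E F : Type*} {Ψy : (T → E) → (T → F) → T → E} {Ψu : (T → E) → (T → F) → T → F}

theorem eq_iff_eq_sub [AddGroup E] [AddGroup F] {p : (T → E) × (T → F)} {y : T → E} {u : T → F} :
    idAddPair Ψy Ψu p = (y, u) ↔ p.1 = y - Ψy p.1 p.2 ∧ p.2 = u - Ψu p.1 p.2 := by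
  simp only [idAddPair, Prod.mk.injEq, eq_sub_iff_add_eq]

variable [PartialOrder T] [WellFoundedLT T]

section Cancel

variable [Add E] [IsRightCancelAdd E] [Add F] [IsRightCancelAdd F]
  {p p' : (T → E) × (T → F)} {t : T}

theorem eqOn_Iio (hΨy : DependsWithin Iio Iio Ψy) (hΨu : DependsWithin Iic Iio Ψu)
    (hy : EqOn (idAddPair Ψy Ψu p).1 (idAddPair Ψy Ψu p').1 (Iio t))
    (hu : EqOn (idAddPair Ψy Ψu p).2 (idAddPair Ψy Ψu p').2 (Iio t)) :
    EqOn p.1 p'.1 (Iio t) ∧ EqOn p.2 p'.2 (Iio t) := by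
  have agree_at (s : T) (hs : s < t) : p.1 s = p'.1 s ∧ p.2 s = p'.2 s := by
    induction s using WellFoundedLT.induction with
    | ind s ih =>
      have hv_past : EqOn p.1 p'.1 (Iio s) := fun q hq ↦ (ih q hq (hq.trans hs)).1
      have hd_past : EqOn p.2 p'.2 (Iio s) := fun q hq ↦ (ih q hq (hq.trans hs)).2
      have hv : p.1 s = p'.1 s := hΨy.apply_eq_of_add_apply_eq hv_past hd_past (hy hs)
      exact ⟨hv, hΨu.apply_eq_of_add_apply_eq (eqOn_Iic_of_eqOn_Iio hv_past hv) hd_past (hu hs)⟩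
  exact ⟨fun s hs ↦ (agree_at s hs).1, fun s hs ↦ (agree_at s hs).2⟩

theorem eqOn_Iic_fst (hΨy : DependsWithin Iio Iio Ψy) (hΨu : DependsWithin Iic Iio Ψu)
    (hy : EqOn (idAddPair Ψy Ψu p).1 (idAddPair Ψy Ψu p').1 (Iic t))
    (hu : EqOn (idAddPair Ψy Ψu p).2 (idAddPair Ψy Ψu p').2 (Iio t)) :
    EqOn p.1 p'.1 (Iic t) := by
  obtain ⟨hv, hd⟩ := eqOn_Iio hΨy hΨu (hy.mono Iio_subset_Iic_self) hu
  exact eqOn_Iic_of_eqOn_Iio hv (hΨy.apply_eq_of_add_apply_eq hv hd (hy self_mem_Iic))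

theorem eqOn_Iic_snd (hΨy : DependsWithin Iio Iio Ψy) (hΨu : DependsWithin Iic Iio Ψu)
    (hy : EqOn (idAddPair Ψy Ψu p).1 (idAddPair Ψy Ψu p').1 (Iic t))
    (hu : EqOn (idAddPair Ψy Ψu p).2 (idAddPair Ψy Ψu p').2 (Iic t)) :
    EqOn p.2 p'.2 (Iic t) := by
  have hu_past := hu.mono Iio_subset_Iic_self
  have hv := eqOn_Iic_fst hΨy hΨu hy hu_past
  have hd := (eqOn_Iio hΨy hΨu (hy.mono Iio_subset_Iic_self) hu_past).2
  exact eqOn_Iic_of_eqOn_Iio hd (hΨu.apply_eq_of_add_apply_eq hv hd (hu self_mem_Iic))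

theorem injective (hΨy : DependsWithin Iio Iio Ψy) (hΨu : DependsWithin Iic Iio Ψu) :
    Function.Injective (idAddPair Ψy Ψu) := by
  intro p p' h
  have hy (t : T) : EqOn (idAddPair Ψy Ψu p).1 (idAddPair Ψy Ψu p').1 (Iic t) := h ▸ eqOn_refl _ _
  have hu (t : T) : EqOn (idAddPair Ψy Ψu p).2 (idAddPair Ψy Ψu p').2 (Iic t) := h ▸ eqOn_refl _ _
  ext t : 2
  · exact eqOn_Iic_fst hΨy hΨu (hy t) ((hu t).mono Iio_subset_Iic_self) self_mem_Iic
  · exact eqOn_Iic_snd hΨy hΨu (hy t) (hu t) self_mem_Iic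

theorem rightInverse_fst_dependsWithin (hΨy : DependsWithin Iio Iio Ψy)
    (hΨu : DependsWithin Iic Iio Ψu) {Ξ : (T → E) × (T → F) → (T → E) × (T → F)}
    (hΞ : Function.RightInverse Ξ (idAddPair Ψy Ψu)) :
    DependsWithin Iic Iio (fun y u ↦ (Ξ (y, u)).1) := by
  intro y y' u u' t hy hu
  refine eqOn_Iic_fst hΨy hΨu ?_ ?_ self_mem_Iic
  · rwa [hΞ, hΞ]
  · rwa [hΞ, hΞ]

theorem rightInverse_snd_dependsWithin (hΨy : DependsWithin Iio Iio Ψy)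
    (hΨu : DependsWithin Iic Iio Ψu) {Ξ : (T → E) × (T → F) → (T → E) × (T → F)}
    (hΞ : Function.RightInverse Ξ (idAddPair Ψy Ψu)) :
    DependsWithin Iic Iic (fun y u ↦ (Ξ (y, u)).2) := by
  intro y y' u u' t hy hu
  refine eqOn_Iic_snd hΨy hΨu ?_ ?_ self_mem_Iic
  · rwa [hΞ, hΞ]
  · rwa [hΞ, hΞ]

end Cancel

variable [AddGroup E] [AddGroup F]

theorem surjective (hΨy : DependsWithin Iio Iio Ψy) (hΨu : DependsWithin Iic Iio Ψu) :
    Function.Surjective (idAddPair Ψy Ψu) := by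
  rintro ⟨y, u⟩
  let nextV (x : T → E × F) : T → E := y - Ψy (Prod.fst ∘ x) (Prod.snd ∘ x)
  -- Feeding `nextV x` rather than `Prod.fst ∘ x` to `Ψu` makes the iteration strictly causal.
  let nextD (x : T → E × F) : T → F := u - Ψu (nextV x) (Prod.snd ∘ x)
  have nextV_eq {x x' : T → E × F} {t : T} (h : EqOn x x' (Iio t)) : nextV x t = nextV x' t :=
    congrArg (y t - ·) (hΨy _ _ _ _ t (h.comp_left (g := Prod.fst)) (h.comp_left (g := Prod.snd)))
  have nextD_eq {x x' : T → E × F} {t : T} (h : EqOn x x' (Iio t)) : nextD x t = nextD x' t :=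
    congrArg (u t - ·) (hΨu _ _ _ _ t
      (fun s hs ↦ nextV_eq (h.mono (Iio_subset_Iio hs))) (h.comp_left (g := Prod.snd)))
  obtain ⟨x, hx⟩ := exists_fixedPoint_of_dependsOn_Iio (G := fun x t ↦ (nextV x t, nextD x t))
    fun t _ _ h ↦ Prod.ext (nextV_eq h) (nextD_eq h)
  have hv : nextV x = Prod.fst ∘ x := congrArg (Prod.fst ∘ ·) hx
  have hd : nextD x = Prod.snd ∘ x := congrArg (Prod.snd ∘ ·) hx
  refine ⟨(Prod.fst ∘ x, Prod.snd ∘ x), eq_iff_eq_sub.2 ⟨hv.symm, ?_⟩⟩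
  calc Prod.snd ∘ x = u - Ψu (nextV x) (Prod.snd ∘ x) := hd.symm
    _ = u - Ψu (Prod.fst ∘ x) (Prod.snd ∘ x) := by rw [hv]

theorem bijective (hΨy : DependsWithin Iio Iio Ψy) (hΨu : DependsWithin Iic Iio Ψu) :
    Function.Bijective (idAddPair Ψy Ψu) :=
  ⟨injective hΨy hΨu, surjective hΨy hΨu⟩

end idAddPair

theorem statement2_general {T E F : Type*} [PartialOrder T] [WellFoundedLT T]
    [AddGroup E] [AddGroup F]
    {Ψy : (T → E) → (T → F) → T → E} {Ψu : (T → E) → (T → F) → T → F}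
    (hΨy : DependsWithin Iio Iio Ψy) (hΨu : DependsWithin Iic Iio Ψu) :
    (∀ (y : T → E) (u : T → F), ∃! vd : (T → E) × (T → F),
      vd.1 = y - Ψy vd.1 vd.2 ∧ vd.2 = u - Ψu vd.1 vd.2) ∧
    Function.Bijective (idAddPair Ψy Ψu) ∧
    ∀ Ξ : (T → E) × (T → F) → (T → E) × (T → F), Function.RightInverse Ξ (idAddPair Ψy Ψu) →
      DependsWithin Iic Iio (fun y u ↦ (Ξ (y, u)).1) ∧
      DependsWithin Iic Iic (fun y u ↦ (Ξ (y, u)).2) := by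
  have hbij := idAddPair.bijective hΨy hΨu
  refine ⟨fun y u ↦ ?_, hbij, fun Ξ hΞ ↦ ⟨?_, ?_⟩⟩
  · simpa only [idAddPair.eq_iff_eq_sub] using hbij.existsUnique (y, u)
  · exact idAddPair.rightInverse_fst_dependsWithin hΨy hΨu hΞ
  · exact idAddPair.rightInverse_snd_dependsWithin hΨy hΨu hΞ

/-- invertibility of `Ψ(v,d) = (v + Ψ^{y°}(v,d), d + Ψ^{u°}(v,d))` and the
causality structure of the inverse. -/
theorem statement2 {r m : ℕ}
    (Ψy : Traj r → Traj m → Traj r) (Ψu : Traj r → Traj m → Traj m)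
    (hΨy : CausalSS Ψy) (hΨu : CausalSC Ψu) :
    -- for every (y,u) there is a unique (v,d) with v = y − Ψ^{y°}(v,d), d = u − Ψ^{u°}(v,d)
    (∀ (y : Traj r) (u : Traj m),
      ∃! vd : Traj r × Traj m,
        vd.1 = y - Ψy vd.1 vd.2 ∧ vd.2 = u - Ψu vd.1 vd.2) ∧
    -- Ψ is a bijection
    Function.Bijective
      (fun vd : Traj r × Traj m => (vd.1 + Ψy vd.1 vd.2, vd.2 + Ψu vd.1 vd.2)) ∧
    -- the inverse map has first component causal in y, strictly causal in u,
    -- and second component causal in both arguments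
    (∀ Ξ : Traj r × Traj m → Traj r × Traj m,
      (∀ vd : Traj r × Traj m,
        Ξ (vd.1 + Ψy vd.1 vd.2, vd.2 + Ψu vd.1 vd.2) = vd) →
      (∀ yu : Traj r × Traj m,
        ((Ξ yu).1 + Ψy (Ξ yu).1 (Ξ yu).2, (Ξ yu).2 + Ψu (Ξ yu).1 (Ξ yu).2) = yu) →
      CausalSC (fun (y : Traj r) (u : Traj m) => (Ξ (y, u)).1) ∧
      CausalCC (fun (y : Traj r) (u : Traj m) => (Ξ (y, u)).2)) := by
  obtain ⟨hunique, hbij, hinv⟩ := statement2_general hΨy hΨu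
  exact ⟨hunique, hbij, fun Ξ _ hΞ ↦ hinv Ξ hΞ⟩
end

section
/- Let G : ℓ^m → ℓ^r be strictly causal, let M : ℓ^r × ℓ^m → ℓ^m be causal–strictly-causal, and let K : ℓ^r → ℓ^m be the unique causal controller whose closed-loop map with G equals the map (Ψ^y, Ψ^u) constructed from M (via the unique solution (β,δ) of β = v + G(d − δ) − G(0), δ = −M(β,δ), with Ψ^u(v,d) = d − δ and Ψ^y(v,d) = G(Ψ^u(v,d)) + v). Then for every y ∈ ℓ^r, the sequence K y is the unique sequence u° ∈ ℓ^m satisfying u° = M(y − G(0), −u°); this fixed-point equation has a unique solution since M is strictly causal in its second argument. -/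
/-!
The response of the plant to `K y` under the disturbance `v = y - G (K y)` is `y` itself, so
`(y, K y)` solves the closed loop at `(v, 0)`. Since `K ∘ (G · + v)` is strictly causal it has only
one fixed point, so `K y` must be the input `-δ` prescribed by `M`; then `β = y - G 0`, and the
equation `δ = -M β δ` becomes the fixed-point equation for `K y`.

In terms of `DependsOn`, an operator `A` is causal when `A · t` depends only on `Set.Iic t`, and
strictly causal when it depends only on `Set.Iio t`.
-/

section StrictlyCausalFixedPoint

open Set

variable {ι : Type*} [Preorder ι] [WellFoundedLT ι] {α : ι → Type*}
  {F : (∀ t, α t) → ∀ t, α t}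

theorem eq_of_eq_apply_of_dependsOn_Iio (hF : ∀ t, DependsOn (F · t) (Iio t))
    {x x' : ∀ t, α t} (hx : x = F x) (hx' : x' = F x') : x = x' := by
  funext t
  induction t using WellFoundedLT.induction with
  | ind t ih =>
    calc x t = F x t := congrFun hx t
      _ = F x' t := hF t ih
      _ = x' t := (congrFun hx' t).symm

theorem exists_eq_apply_of_dependsOn_Iio [∀ t, Nonempty (α t)]
    (hF : ∀ t, DependsOn (F · t) (Iio t)) : ∃ x, x = F x := by
  classical
  -- `F · t` ignores everything from time `t` on, so a past can be completed arbitrarily.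
  let filler : ∀ t, α t := fun _ => Classical.arbitrary _
  let next (t : ι) (past : ∀ s, s < t → α s) : α t :=
    F (fun s => if h : s < t then past s h else filler s) t
  refine ⟨wellFounded_lt.fix next, funext fun t => ?_⟩
  rw [wellFounded_lt.fix_eq]
  exact hF t fun s hs => dif_pos hs

theorem existsUnique_eq_apply_of_dependsOn_Iio [∀ t, Nonempty (α t)]
    (hF : ∀ t, DependsOn (F · t) (Iio t)) : ∃! x, x = F x :=
  existsUnique_of_exists_of_unique (exists_eq_apply_of_dependsOn_Iio hF)
    fun _ _ => eq_of_eq_apply_of_dependsOn_Iio hF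

end StrictlyCausalFixedPoint

section Composition

open Set

variable {ι : Type*} [Preorder ι] {α β γ : ι → Type*}
  {A : (∀ t, β t) → ∀ t, γ t} {B : (∀ t, α t) → ∀ t, β t}

theorem dependsOn_Iio_comp_of_Iic_of_Iio
    (hA : ∀ t, DependsOn (A · t) (Iic t)) (hB : ∀ t, DependsOn (B · t) (Iio t)) (t : ι) :
    DependsOn (fun x => A (B x) t) (Iio t) :=
  fun _ _ h => hA t fun s hs => hB s fun q hq => h q (lt_of_lt_of_le hq hs)

theorem dependsOn_Iio_comp_of_Iio_of_Iic
    (hA : ∀ t, DependsOn (A · t) (Iio t)) (hB : ∀ t, DependsOn (B · t) (Iic t)) (t : ι) :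
    DependsOn (fun x => A (B x) t) (Iio t) :=
  fun _ _ h => hA t fun s hs => hB s fun q hq => h q (lt_of_le_of_lt hq hs)

end Composition

section Feedback

open Set

variable {ι : Type*} {U Y : ι → Type*} {G : (∀ t, U t) → ∀ t, Y t} {K : (∀ t, Y t) → ∀ t, U t}
  {M : (∀ t, Y t) → (∀ t, U t) → ∀ t, U t}

theorem feedback_input_unique [Preorder ι] [WellFoundedLT ι] [∀ t, Add (Y t)]
    (hG : ∀ t, DependsOn (G · t) (Iio t)) (hK : ∀ t, DependsOn (K · t) (Iic t))
    {v : ∀ t, Y t} {u u' : ∀ t, U t} (hu : u = K (G u + v)) (hu' : u' = K (G u' + v)) :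
    u = u' := by
  have hGv (t : ι) : DependsOn (fun u => (G u + v) t) (Iio t) :=
    fun _ _ h => congrArg (· + v t) (hG t h)
  exact eq_of_eq_apply_of_dependsOn_Iio (dependsOn_Iio_comp_of_Iic_of_Iio hK hGv) hu hu'

theorem existsUnique_eq_apply_neg [Preorder ι] [WellFoundedLT ι] [∀ t, Nonempty (U t)]
    [∀ t, Neg (U t)] {F : (∀ t, U t) → ∀ t, U t} (hF : ∀ t, DependsOn (F · t) (Iio t)) :
    ∃! u, u = F (-u) := by
  have hneg (t : ι) : DependsOn (fun u : ∀ t, U t => (-u) t) (Iic t) :=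
    fun _ _ h => congrArg Neg.neg (h t self_mem_Iic)
  exact existsUnique_eq_apply_of_dependsOn_Iio
    (dependsOn_Iio_comp_of_Iio_of_Iic hF hneg)

theorem controller_eq_of_closedLoop [∀ t, Zero (U t)] [∀ t, InvolutiveNeg (U t)]
    [∀ t, AddCommGroup (Y t)] {v y β : ∀ t, Y t} {δ : ∀ t, U t}
    (hβ : β = v + G (-δ) - G 0) (hδ : δ = -M β δ) (hy : y = G (-δ) + v) (hu : -δ = K y) :
    K y = M (y - G 0) (-K y) :=
  calc K y = -δ := hu.symm
    _ = M β δ := neg_eq_iff_eq_neg.mpr hδ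
    _ = M (y - G 0) (-K y) := by rw [hβ, add_comm v, ← hy, ← hu, neg_neg]

theorem statement8_general [Preorder ι] [WellFoundedLT ι] [∀ t, AddGroup (U t)]
    [∀ t, AddCommGroup (Y t)] (hG : ∀ t, DependsOn (G · t) (Iio t))
    (hM : ∀ y t, DependsOn (M y · t) (Iio t)) (hK : ∀ t, DependsOn (K · t) (Iic t))
    (hach : ∀ v, ∃ β δ, β = v + G (-δ) - G 0 ∧ δ = -M β δ ∧ -δ = K (G (-δ) + v))
    (y : ∀ t, Y t) :
    (∃! u, u = M (y - G 0) (-u)) ∧ K y = M (y - G 0) (-K y) := by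
  obtain ⟨β, δ, hβ, hδ, hloop⟩ := hach (y - G (K y))
  have hinput : -δ = K y := feedback_input_unique hG hK hloop (by rw [add_sub_cancel])
  have houtput : y = G (-δ) + (y - G (K y)) := by rw [hinput, add_sub_cancel]
  exact ⟨existsUnique_eq_apply_neg (hM (y - G 0)),
    controller_eq_of_closedLoop hβ hδ houtput hinput⟩

end Feedback

/-- recursive implementation of the controller achieving the closed-loop maps
generated by `M`: for every `y`, `K y` is the unique `u°` with `u° = M(y − G(0), −u°)`. -/
theorem statement8 {r m : ℕ} (G : Traj m → Traj r) (M : Traj r → Traj m → Traj m)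
    (K : Traj r → Traj m)
    (hG : StrictlyCausal G) (hM : CausalSC M) (hK : Causal K)
    (S : Traj r × Traj m → Traj r × Traj m)
    (hS : ∀ (v : Traj r) (d : Traj m),
      (S (v, d)).1 = v + G (d - (S (v, d)).2) - G 0 ∧
      (S (v, d)).2 = -(M (S (v, d)).1 (S (v, d)).2))
    -- K achieves the closed-loop maps Ψ^u(v,d) = d − δ, Ψ^y(v,d) = G(Ψ^u(v,d)) + v
    (hach : ∀ (v : Traj r) (d : Traj m),
      d - (S (v, d)).2 = K (G (d - (S (v, d)).2) + v) + d) :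
    ∀ y : Traj r,
      (∃! u0 : Traj m, u0 = M (y - G 0) (-u0)) ∧
      K y = M (y - G 0) (-(K y)) :=
  statement8_general (fun t x x' => hG x x' t)
    (fun y t z z' => hM y y z z' t fun _ _ => rfl) (fun t x x' => hK x x' t)
    fun v => ⟨(S (v, 0)).1, (S (v, 0)).2, by
      simpa only [zero_sub, add_zero, and_assoc] using And.intro (hS v 0) (hach v 0)⟩
end
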